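/- Let r ≥ 1, n ≥ 1, and 1 ≤ k ≤ n. For each j with 1 ≤ j ≤ rn+1, the number of paths p in 𝒫(n,r,1) with p_1 = +1 that have exactly k peaks and exactly j up steps starting on or below the x-axis equals (1/(rn+1))·C(rn+1,k)·C(n−1,k−1). -/

import Mathlib

open Finset

/-- The sum of the first `m` entries of a sequence `p` of length `N` (the height `s_m`). -/
def psum {N : ℕ} (p : Fin N → ℤ) (m : ℕ) : ℤ :=
  ∑ j ∈ Finset.univ.filter (fun j : Fin N => (j : ℕ) < m), p j

namespace GNCF

def ups {m : ℕ} (w : Fin m → Bool) : ℕ := (univ.filter (fun i => w i = true)).card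

def pk {m : ℕ} (w : Fin (m+1) → Bool) : ℕ :=
  (univ.filter (fun i : Fin m => w i.castSucc = true ∧ w i.succ = false)).card

def G (m : ℕ) (a : Bool) (u k : ℕ) : ℕ :=
  (univ.filter (fun w : Fin m → Bool => ups w = u ∧ pk (Fin.cons a w : Fin (m+1) → Bool) = k)).card

lemma ups_cons {m : ℕ} (b : Bool) (w : Fin m → Bool) :
    ups (Fin.cons b w : Fin (m+1) → Bool) = (if b = true then 1 else 0) + ups w := by
  unfold ups
  simp only [Finset.card_filter, Fin.sum_univ_succ, Fin.cons_zero, Fin.cons_succ]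

lemma pk_cons {m : ℕ} (a b : Bool) (w : Fin m → Bool) :
    pk (Fin.cons a (Fin.cons b w : Fin (m+1) → Bool) : Fin (m+2) → Bool) =
      (if a = true ∧ b = false then 1 else 0) + pk (Fin.cons b w : Fin (m+1) → Bool) := by
  unfold pk
  simp only [Finset.card_filter, Fin.sum_univ_succ (n := m), Fin.castSucc_zero, Fin.cons_zero,
    Fin.cons_succ, ← Fin.succ_castSucc]

lemma ups_le {m : ℕ} (w : Fin m → Bool) : ups w ≤ m := by
  unfold ups
  exact (card_filter_le _ _).trans (by simp)

lemma G_succ (m : ℕ) (a : Bool) (u k : ℕ) :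
    G (m+1) a u k =
      (univ.filter (fun w : Fin m → Bool => 1 + ups w = u ∧
        pk (Fin.cons true w : Fin (m+1) → Bool) = k)).card +
      (univ.filter (fun w : Fin m → Bool => ups w = u ∧
        (if a = true then 1 else 0) + pk (Fin.cons false w : Fin (m+1) → Bool) = k)).card := by
  unfold G
  simp only [Finset.card_filter]
  rw [← (Fin.consEquiv (fun _ : Fin (m+1) => Bool)).sum_comp, Fintype.sum_prod_type,
    Fintype.sum_bool]
  simp [Fin.consEquiv, ups_cons, pk_cons]

lemma G_gt (m : ℕ) (a : Bool) (u k : ℕ) (h : m < u) : G m a u k = 0 := by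
  unfold G
  rw [card_eq_zero, filter_eq_empty_iff]
  rintro w - ⟨h1, -⟩
  have := ups_le w
  omega

lemma G_false_succ (m u k : ℕ) : G (m+1) false (u+1) k = G m true u k + G m false (u+1) k := by
  rw [G_succ]; unfold G
  simp [add_comm 1]

lemma G_false_zero (m k : ℕ) : G (m+1) false 0 k = G m false 0 k := by
  rw [G_succ]; unfold G
  simp [add_comm 1]

lemma G_true_succ (m u k : ℕ) :
    G (m+1) true (u+1) (k+1) = G m true u (k+1) + G m false (u+1) k := by
  rw [G_succ]; unfold G
  simp [add_comm 1]

lemma G_true_succ_zero (m u : ℕ) : G (m+1) true (u+1) 0 = G m true u 0 := by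
  rw [G_succ]; unfold G
  simp [add_comm 1]

lemma G_true_zero (m k : ℕ) : G (m+1) true 0 (k+1) = G m false 0 k := by
  rw [G_succ]; unfold G
  simp [add_comm 1]

lemma G_true_zero_zero (m : ℕ) : G (m+1) true 0 0 = 0 := by
  rw [G_succ]
  simp

lemma G_zero (a : Bool) (k : ℕ) : G 0 a 0 k = if k = 0 then 1 else 0 := by
  unfold G ups pk
  rcases k with _ | k <;> simp

def FU : ℕ → ℕ → ℕ → ℕ
  | _, 0, 0 => 1
  | _, 0, _+1 => 0
  | _, _+1, 0 => 0
  | u, d+1, k+1 => Nat.choose (u+1) (k+1) * Nat.choose d k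

lemma G_eq (m : ℕ) : ∀ u d k, u + d = m →
    G m false u k = Nat.choose u k * Nat.choose d k ∧ G m true u k = FU u d k := by
  induction m with
  | zero =>
    intro u d k h
    obtain ⟨rfl, rfl⟩ : u = 0 ∧ d = 0 := by omega
    rw [G_zero, G_zero]
    rcases k with _ | k <;> simp [FU]
  | succ m ih =>
    intro u d k h
    rcases u with _ | u
    · obtain rfl : d = m+1 := by omega
      rw [G_false_zero, (ih 0 m k (by omega)).1]
      rcases k with _ | k
      · simp [FU, G_true_zero_zero]
      · rw [G_true_zero, (ih 0 m k (by omega)).1]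
        rcases k with _ | k
        · simp [FU]
        · simp [FU, Nat.choose_eq_zero_of_lt (show 1 < k+1+1 by omega)]
    · rcases d with _ | d
      · rw [G_false_succ, (ih u 0 k (by omega)).2, G_gt m _ (u+1) _ (by omega)]
        rcases k with _ | k
        · rw [G_true_succ_zero, (ih u 0 0 (by omega)).2]; simp [FU]
        · rw [G_true_succ, (ih u 0 (k+1) (by omega)).2, G_gt m _ (u+1) _ (by omega)]; simp [FU]
      · rw [G_false_succ, (ih u (d+1) k (by omega)).2, (ih (u+1) d k (by omega)).1]
        rcases k with _ | k
        · rw [G_true_succ_zero, (ih u (d+1) 0 (by omega)).2]; simp [FU]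
        · rw [G_true_succ, (ih u (d+1) (k+1) (by omega)).2, (ih (u+1) d k (by omega)).1]
          simp only [FU, Nat.choose_succ_succ]
          constructor <;> ring

/-- number of words starting with an up step, with `u+1` ups, `d+1` downs and `k+1` peaks -/
lemma count_X (m u d k : ℕ) (h : u + (d + 1) = m) :
    (univ.filter (fun w : Fin (m+1) → Bool => ups w = u + 1 ∧ w 0 = true ∧ pk w = k+1)).card
      = Nat.choose (u+1) (k+1) * Nat.choose d k := by
  have := (G_eq m u (d+1) (k+1) h).2
  rw [FU] at this
  rw [← this]
  unfold G
  simp only [Finset.card_filter]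
  rw [← (Fin.consEquiv (fun _ : Fin (m+1) => Bool)).sum_comp, Fintype.sum_prod_type,
    Fintype.sum_bool]
  simp [Fin.consEquiv, ups_cons, add_comm 1]

/-- Rank lemma. -/
lemma rank_unique {α β : Type*} [DecidableEq α] [LinearOrder β] (A : Finset α) (f : α → β)
    (hf : Function.Injective f) (j : ℕ) (h1 : 1 ≤ j) (h2 : j ≤ A.card) :
    (A.filter (fun s => (A.filter (fun t => f t ≤ f s)).card = j)).card = 1 := by
  have hmaps : ∀ s ∈ A, (A.filter (fun t => f t ≤ f s)).card ∈ Icc 1 A.card := by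
    intro s hs
    rw [mem_Icc]
    exact ⟨card_pos.2 ⟨s, by simp [hs]⟩, card_filter_le _ _⟩
  have hlt : ∀ s ∈ A, ∀ s' ∈ A, f s < f s' →
      (A.filter (fun t => f t ≤ f s)).card < (A.filter (fun t => f t ≤ f s')).card := by
    intro s hs s' hs' h
    apply card_lt_card
    rw [Finset.ssubset_iff_of_subset]
    · exact ⟨s', by simp [hs'], by simp [h]⟩
    · intro t
      simp only [mem_filter]
      exact fun ⟨a, b⟩ => ⟨a, b.trans h.le⟩
  have hinj : ∀ s ∈ A, ∀ s' ∈ A,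
      (A.filter (fun t => f t ≤ f s)).card = (A.filter (fun t => f t ≤ f s')).card → s = s' := by
    intro s hs s' hs' h
    rcases lt_trichotomy (f s) (f s') with h' | h' | h'
    · have := hlt s hs s' hs' h'; omega
    · exact hf h'
    · have := hlt s' hs' s hs h'; omega
  have himg : A.image (fun s => (A.filter (fun t => f t ≤ f s)).card) = Icc 1 A.card := by
    apply eq_of_subset_of_card_le
    · intro x hx
      obtain ⟨s, hs, rfl⟩ := mem_image.1 hx
      exact hmaps s hs
    · rw [card_image_of_injOn (fun s hs s' hs' h => hinj s hs s' hs' h)]; simp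
  have hj : j ∈ A.image (fun s => (A.filter (fun t => f t ≤ f s)).card) := by
    rw [himg]; simp [h1, h2]
  obtain ⟨s, hs, rfl⟩ := mem_image.1 hj
  rw [card_eq_one]
  refine ⟨s, ?_⟩
  ext x
  simp only [mem_filter, mem_singleton]
  exact ⟨fun ⟨a, b⟩ => hinj x a s hs b, fun h => by subst h; exact ⟨hs, rfl⟩⟩

def stepv (r : ℕ) (b : Bool) : ℤ := if b = true then 1 else -(r:ℤ)

def cnt {m : ℕ} (r : ℕ) (w : Fin m → Bool) : ℕ :=
  (univ.filter (fun i : Fin m => w i = true ∧ psum (fun i => stepv r (w i)) (i:ℕ) ≤ 0)).card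

/-- cyclic peaks -/
def cpk {m : ℕ} (w : Fin (m+1) → Bool) : ℕ :=
  (univ.filter (fun i : Fin (m+1) => w i = true ∧ w (i+1) = false)).card

lemma cpk_eq {m : ℕ} (w : Fin (m+1) → Bool) (h : w 0 = true) : cpk w = pk w := by
  unfold cpk pk
  simp only [Finset.card_filter]
  rw [Fin.sum_univ_castSucc]
  simp [h]

def shift {m : ℕ} (s : Fin (m+1)) (w : Fin (m+1) → Bool) : Fin (m+1) → Bool := fun i => w (i + s)

lemma ups_shift {m : ℕ} (s : Fin (m+1)) (w : Fin (m+1) → Bool) : ups (shift s w) = ups w := by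
  unfold ups shift
  simp only [Finset.card_filter]
  exact Equiv.sum_comp (Equiv.addRight s) (fun i => if w i = true then 1 else 0)

lemma cpk_shift {m : ℕ} (s : Fin (m+1)) (w : Fin (m+1) → Bool) : cpk (shift s w) = cpk w := by
  unfold cpk shift
  simp only [Finset.card_filter]
  rw [← Equiv.sum_comp (Equiv.addRight s) (fun i => if w i = true ∧ w (i+1) = false then 1 else 0)]
  refine Finset.sum_congr rfl fun i _ => ?_
  rw [Equiv.coe_addRight, add_right_comm i s 1]

def shiftEquiv {m : ℕ} (s : Fin (m+1)) : (Fin (m+1) → Bool) ≃ (Fin (m+1) → Bool) where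
  toFun := shift s
  invFun := shift (-s)
  left_inv w := by funext i; simp [shift]
  right_inv w := by funext i; simp [shift]

/-- extended prefix sums -/
def S {m : ℕ} (r : ℕ) (w : Fin (m+1) → Bool) (t : ℕ) : ℤ :=
  ∑ i ∈ range t, stepv r (w (Fin.ofNat (m+1) i))

lemma psum_eq {m : ℕ} (p : Fin (m+1) → ℤ) (t : ℕ) (ht : t ≤ m + 1) :
    psum p t = ∑ i ∈ range t, p (Fin.ofNat (m+1) i) := by
  unfold psum
  refine Finset.sum_bij' (fun i _ => (i:ℕ)) (fun i _ => Fin.ofNat (m+1) i) ?_ ?_ ?_ ?_ ?_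
  · intro i hi; simpa using hi
  · intro i hi
    rw [mem_range] at hi
    simp [Nat.mod_eq_of_lt (show i < m+1 by omega), hi]
  · intro i hi; ext; simp
  · intro i hi
    rw [mem_range] at hi
    simp [Nat.mod_eq_of_lt (show i < m+1 by omega)]
  · intro i hi; congr 1; ext; simp

lemma psum_shift {m : ℕ} (r : ℕ) (s : Fin (m+1)) (w : Fin (m+1) → Bool) (t : ℕ) (ht : t ≤ m + 1) :
    psum (fun i => stepv r (shift s w i)) t = S r w (s + t) - S r w s := by
  rw [psum_eq _ _ ht]
  unfold S
  rw [Finset.sum_range_add, add_sub_cancel_left]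
  refine Finset.sum_congr rfl fun i _ => ?_
  unfold shift
  congr 2
  ext
  simp [Fin.val_add, add_comm]

lemma sum_val {m : ℕ} (r : ℕ) (w : Fin m → Bool) :
    ∑ i, stepv r (w i) = (ups w : ℤ) - r * ((m:ℤ) - ups w) := by
  have h : ∀ b, stepv r b = (1 + r) * (if b = true then 1 else 0) - r := by
    intro b; unfold stepv; split <;> ring
  simp only [h, Finset.sum_sub_distrib, ← Finset.mul_sum]
  unfold ups
  simp [Finset.sum_boole]
  ring

lemma S_period {m : ℕ} (r : ℕ) (w : Fin (m+1) → Bool) (h : ∑ i, stepv r (w i) = 1) (t : ℕ) :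
    S r w (t + (m+1)) = S r w t + 1 := by
  unfold S
  rw [add_comm t, Finset.sum_range_add, add_comm]
  congr 1
  · refine Finset.sum_congr rfl fun i _ => ?_
    congr 2; ext; simp
  · rw [← psum_eq (fun i => stepv r (w i)) (m+1) le_rfl, ← h]
    unfold psum
    congr 1
    ext i; simp [Nat.le_of_lt_succ i.2]

lemma cnt_shift {m : ℕ} (r : ℕ) (w : Fin (m+1) → Bool) (h : ∑ i, stepv r (w i) = 1)
    (s : Fin (m+1)) :
    cnt r (shift s w) = ((univ.filter (fun i => w i = true)).filter
      (fun t : Fin (m+1) => toLex (S r w t, OrderDual.toDual t) ≤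
        toLex (S r w s, OrderDual.toDual s))).card := by
  unfold cnt
  rw [filter_filter]
  simp only [Finset.card_filter]
  rw [← Equiv.sum_comp (Equiv.addRight s) (fun t : Fin (m+1) => if w t = true ∧
    toLex (S r w t, OrderDual.toDual t) ≤ toLex (S r w s, OrderDual.toDual s) then 1 else 0)]
  refine Finset.sum_congr rfl fun i _ => ?_
  have hi := i.2
  have hs := s.2
  rw [psum_shift _ _ _ _ hi.le, Equiv.coe_addRight]
  simp only [Prod.Lex.toLex_le_toLex, OrderDual.toDual_le_toDual]
  have key : (S r w (s + i) - S r w s ≤ 0) ↔ (S r w ((i + s : Fin (m+1)) : ℕ) < S r w s ∨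
      S r w ((i + s : Fin (m+1)) : ℕ) = S r w s ∧ s ≤ i + s) := by
    rw [Fin.le_def, Fin.val_add]
    by_cases hlt : (i:ℕ) + s < m + 1
    · rw [Nat.mod_eq_of_lt hlt, add_comm (s:ℕ)]
      have : (s:ℕ) ≤ i + s := by omega
      simp only [this, and_true]
      omega
    · have e : ((i:ℕ) + s) % (m+1) = i + s - (m+1) := by
        rw [Nat.mod_eq_sub_mod (by omega), Nat.mod_eq_of_lt (by omega)]
      rw [e]
      have := S_period r w h (i + s - (m+1))
      rw [show (i + s - (m+1)) + (m+1) = (s + i : ℕ) by omega] at this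
      rw [this]
      omega
  simp only [key]
  rfl

lemma double (m r M k : ℕ) (hsum : ∀ w : Fin (m+1) → Bool, ups w = M → ∑ i, stepv r (w i) = 1)
    (j : ℕ) (h1 : 1 ≤ j) (h2 : j ≤ M) :
    (univ.filter (fun w : Fin (m+1) → Bool => ups w = M ∧ w 0 = true ∧ cpk w = k ∧
      cnt r w = j)).card * M =
    (univ.filter (fun w : Fin (m+1) → Bool => ups w = M ∧ w 0 = true ∧ cpk w = k)).card := by
  set Y := (univ.filter (fun w : Fin (m+1) → Bool => ups w = M ∧ cpk w = k)) with hY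
  have gen : ∀ Q : (Fin (m+1) → Bool) → Prop, ∀ [DecidablePred Q], ∀ c : ℕ,
      (∀ w ∈ Y, (univ.filter (fun s => w s = true ∧ Q (shift s w))).card = c) →
      (m+1) * (univ.filter (fun w : Fin (m+1) → Bool => ups w = M ∧ w 0 = true ∧ cpk w = k ∧
        Q w)).card = Y.card * c := by
    intro Q _ c hc
    have e1 : ∑ w ∈ Y, (univ.filter (fun s => w s = true ∧ Q (shift s w))).card = Y.card * c := by
      rw [Finset.sum_congr rfl hc]; simp
    rw [← e1]
    simp only [hY, Finset.card_filter, Finset.sum_filter]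
    have : ∀ s : Fin (m+1), ∑ w : Fin (m+1) → Bool,
        (if ups w = M ∧ w 0 = true ∧ cpk w = k ∧ Q w then 1 else 0) =
        ∑ w : Fin (m+1) → Bool, if ups w = M ∧ cpk w = k then
          (if w s = true ∧ Q (shift s w) then 1 else 0) else 0 := by
      intro s
      rw [← Equiv.sum_comp (shiftEquiv s)]
      refine Finset.sum_congr rfl fun w _ => ?_
      have h0 : shift s w 0 = w s := by simp [shift]
      simp only [shiftEquiv, Equiv.coe_fn_mk, ups_shift, cpk_shift, h0, ← ite_and]
      congr 1
      apply propext
      tauto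
    calc _ = ∑ s : Fin (m+1), ∑ w : Fin (m+1) → Bool,
        (if ups w = M ∧ w 0 = true ∧ cpk w = k ∧ Q w then 1 else 0) := by simp
      _ = _ := by
        rw [Finset.sum_congr rfl (fun s _ => this s), Finset.sum_comm]
        refine Finset.sum_congr rfl fun w _ => ?_
        split <;> simp
  have g1 := gen (fun w => cnt r w = j) 1 (by
    intro w hw
    simp only [hY, mem_filter, mem_univ, true_and] at hw
    have := rank_unique (univ.filter (fun i => w i = true))
      (fun t : Fin (m+1) => toLex (S r w t, OrderDual.toDual t))
      (by intro a b hab; simpa using (Prod.ext_iff.1 (toLex.injective hab)).2) j h1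
      (by rw [← hw.1] at h2; exact h2)
    refine Eq.trans ?_ this
    rw [filter_filter]
    congr 1
    ext s
    simp only [mem_filter, mem_univ, true_and]
    rw [cnt_shift r w (hsum w hw.1)])
  have g2 := gen (fun _ => True) M (by
    intro w hw
    simp only [hY, mem_filter, mem_univ, true_and] at hw
    simp only [and_true]
    exact hw.1)
  simp only [and_true] at g2
  apply Nat.eq_of_mul_eq_mul_left (Nat.succ_pos m)
  rw [Nat.succ_eq_add_one, g2, ← mul_assoc, g1, mul_one]

end GNCF
open GNCF

/-- Among paths in 𝒫(n,r,1) starting with an up step and having exactly `k` peaks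
(an up step immediately followed by a down step), for each `1 ≤ j ≤ rn+1` the
number with exactly `j` up steps starting on or below the x-axis is
`(1/(rn+1))·C(rn+1,k)·C(n-1,k-1)`. -/
theorem generalized_narayana_chung_feller (r n k : ℕ) (hr : 1 ≤ r) (hn : 1 ≤ n)
    (hk1 : 1 ≤ k) (hk2 : k ≤ n) (j : ℕ) (hj1 : 1 ≤ j) (hj2 : j ≤ r*n + 1) :
    Nat.card {p : Fin ((r+1)*n+1) → ℤ //
      (∀ i, p i = 1 ∨ p i = -(r : ℤ)) ∧
      (univ.filter (fun i => p i = 1)).card = r*n + 1 ∧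
      p ⟨0, Nat.succ_pos _⟩ = 1 ∧
      (univ.filter (fun i : Fin ((r+1)*n) =>
        p i.castSucc = 1 ∧ p i.succ = -(r : ℤ))).card = k ∧
      (univ.filter (fun i : Fin ((r+1)*n+1) => p i = 1 ∧ psum p (i : ℕ) ≤ 0)).card = j }
      * (r*n + 1) = Nat.choose (r*n+1) k * Nat.choose (n-1) (k-1) := by
  obtain ⟨d, rfl⟩ : ∃ d, n = d + 1 := ⟨n-1, by omega⟩
  obtain ⟨k, rfl⟩ : ∃ d, k = d + 1 := ⟨k-1, by omega⟩
  have hX := count_X ((r+1)*(d+1)) (r*(d+1)) d k (by ring)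
  have hD := double ((r+1)*(d+1)) r (r*(d+1)+1) (k+1) (by
    intro w hw
    rw [sum_val, hw]; push_cast; ring) j hj1 hj2
  simp only [Nat.add_sub_cancel]
  rw [← hX]
  have hXX : (univ.filter (fun w : Fin ((r+1)*(d+1)+1) → Bool =>
        ups w = r*(d+1)+1 ∧ w 0 = true ∧ cpk w = k+1)) =
      (univ.filter (fun w : Fin ((r+1)*(d+1)+1) → Bool =>
        ups w = r*(d+1)+1 ∧ w 0 = true ∧ pk w = k+1)) := by
    ext w
    simp only [mem_filter, mem_univ, true_and]
    constructor <;> rintro ⟨a, b, c⟩ <;> refine ⟨a, b, ?_⟩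
    · rw [← cpk_eq w b, c]
    · rw [cpk_eq w b, c]
  rw [hXX] at hD
  rw [← hD]
  congr 1
  rw [← Nat.subtype_card (univ.filter (fun w : Fin ((r+1)*(d+1)+1) → Bool =>
    ups w = r*(d+1)+1 ∧ w 0 = true ∧ cpk w = k+1 ∧ cnt r w = j)) (fun w => Iff.rfl)]
  have v1 : ∀ b, stepv r b = 1 ↔ b = true := by
    intro b; cases b <;> simp [stepv]; omega
  have v2 : ∀ b, stepv r b = -(r:ℤ) ↔ b = false := by
    intro b; cases b <;> simp [stepv]; omega
  symm
  apply Nat.card_congr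
  refine Equiv.ofBijective (fun w => ⟨fun i => stepv r (w.1 i), ?_⟩) ⟨?_, ?_⟩
  · obtain ⟨w, hw⟩ := w
    simp only [mem_filter, mem_univ, true_and] at hw
    obtain ⟨a, b, c, e⟩ := hw
    rw [cpk_eq w b] at c
    simp only [v1, v2]
    refine ⟨fun i => by cases w i <;> simp, a, b, c, e⟩
  · rintro ⟨w, hw⟩ ⟨w', hw'⟩ h
    simp only [Subtype.mk.injEq] at h ⊢
    funext i
    have := congrFun h i
    rw [Bool.eq_iff_iff, ← v1, ← v1 (w' i)]
    rw [this]
  · rintro ⟨p, hp, a, b, c, e⟩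
    have hpw : p = fun i => stepv r (decide (p i = 1)) := by
      funext i
      rcases hp i with h | h
      · simp [h, stepv]
      · have : ¬ (-(r:ℤ) = 1) := by omega
        simp [h, stepv, this]
    have hd : ∀ i, p i = -(r:ℤ) ↔ decide (p i = 1) = false := by
      intro i
      rcases hp i with h | h <;> simp [h] <;> omega
    have b' : decide (p 0 = 1) = true := by simpa using b
    refine ⟨⟨fun i => decide (p i = 1), ?_⟩, ?_⟩
    · simp only [mem_filter, mem_univ, true_and]
      refine ⟨?_, b', ?_, ?_⟩
      · unfold ups; simpa using a
      · rw [cpk_eq _ b']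
        unfold pk
        simp only [hd] at c
        simpa using c
      · unfold cnt
        rw [← hpw]
        simpa using e
    · apply Subtype.ext
      exact hpw.symm
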